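/- Every finite connected simple graph G with at most 4 vertices satisfies σ×_V(G)=σ×_E(G); every finite connected simple graph G with exactly 5 vertices and at most 6 edges satisfies σ×_V(G)=σ×_E(G); and the graph K_4^+, which has 5 vertices and 7 edges, satisfies σ×_V(K_4^+) ≠ σ×_E(K_4^+). Hence K_4^+ is a graph of minimal order and minimal size with σ×_V(G) ≠ σ×_E(G). -/

import Mathlib

open SimpleGraph

/-- An `l`-track on `G`: a surjective function whose consecutive values are adjacent. -/
def IsTrack {V : Type*} (G : SimpleGraph V) {l : ℕ} (f : Fin l → V) : Prop :=
  Function.Surjective f ∧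
    ∀ i : ℕ, ∀ hi : i + 1 < l, G.Adj (f ⟨i, Nat.lt_of_succ_lt hi⟩) (f ⟨i + 1, hi⟩)

/-- A lazy `l`-track on `G`: consecutive values are adjacent or equal. -/
def IsLazyTrack {V : Type*} (G : SimpleGraph V) {l : ℕ} (f : Fin l → V) : Prop :=
  Function.Surjective f ∧
    ∀ i : ℕ, ∀ hi : i + 1 < l,
      G.Adj (f ⟨i, Nat.lt_of_succ_lt hi⟩) (f ⟨i + 1, hi⟩) ∨
        f ⟨i, Nat.lt_of_succ_lt hi⟩ = f ⟨i + 1, hi⟩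

/-- The condition that every edge of `G` is traversed by `f`. -/
def SweepCond {V : Type*} (G : SimpleGraph V) {l : ℕ} (f : Fin l → V) : Prop :=
  ∀ e ∈ G.edgeSet, ∃ i : ℕ, ∃ hi : i + 1 < l,
    e = s(f ⟨i, Nat.lt_of_succ_lt hi⟩, f ⟨i + 1, hi⟩)

/-- An `l`-sweep on `G`: an `l`-track traversing every edge. -/
def IsSweep {V : Type*} (G : SimpleGraph V) {l : ℕ} (f : Fin l → V) : Prop :=
  IsTrack G f ∧ SweepCond G f

/-- A lazy `l`-sweep on `G`: a lazy `l`-track traversing every edge. -/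
def IsLazySweep {V : Type*} (G : SimpleGraph V) {l : ℕ} (f : Fin l → V) : Prop :=
  IsLazyTrack G f ∧ SweepCond G f

/-- `f` and `g` are opposite: at each step exactly `f` moves iff `g` stays. -/
def IsOpposite {V : Type*} (G : SimpleGraph V) {l : ℕ} (f g : Fin l → V) : Prop :=
  ∀ i : ℕ, ∀ hi : i + 1 < l,
    (G.Adj (f ⟨i, Nat.lt_of_succ_lt hi⟩) (f ⟨i + 1, hi⟩) ↔
      g ⟨i, Nat.lt_of_succ_lt hi⟩ = g ⟨i + 1, hi⟩)

/-- The distance `m_G(f,g)`: minimal distance between simultaneous positions. -/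
noncomputable def mDist {V : Type*} (G : SimpleGraph V) {l : ℕ} (f g : Fin l → V) : ℕ :=
  sInf {d | ∃ i : Fin l, G.dist (f i) (g i) = d}

/-- Strong vertex span `σ⊠_V(G)`. -/
noncomputable def strongVertexSpan {V : Type*} (G : SimpleGraph V) : ℕ :=
  sSup {d | ∃ (l : ℕ) (f g : Fin l → V), IsLazyTrack G f ∧ IsLazyTrack G g ∧ mDist G f g = d}

/-- Direct vertex span `σ×_V(G)`. -/
noncomputable def directVertexSpan {V : Type*} (G : SimpleGraph V) : ℕ :=
  sSup {d | ∃ (l : ℕ) (f g : Fin l → V), IsTrack G f ∧ IsTrack G g ∧ mDist G f g = d}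

/-- Cartesian vertex span `σ□_V(G)`. -/
noncomputable def cartesianVertexSpan {V : Type*} (G : SimpleGraph V) : ℕ :=
  sSup {d | ∃ (l : ℕ) (f g : Fin l → V),
    IsLazyTrack G f ∧ IsLazyTrack G g ∧ IsOpposite G f g ∧ mDist G f g = d}

/-- Strong edge span `σ⊠_E(G)`. -/
noncomputable def strongEdgeSpan {V : Type*} (G : SimpleGraph V) : ℕ :=
  sSup {d | ∃ (l : ℕ) (f g : Fin l → V), IsLazySweep G f ∧ IsLazySweep G g ∧ mDist G f g = d}

/-- Direct edge span `σ×_E(G)`. -/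
noncomputable def directEdgeSpan {V : Type*} (G : SimpleGraph V) : ℕ :=
  sSup {d | ∃ (l : ℕ) (f g : Fin l → V), IsSweep G f ∧ IsSweep G g ∧ mDist G f g = d}

/-- Cartesian edge span `σ□_E(G)`. -/
noncomputable def cartesianEdgeSpan {V : Type*} (G : SimpleGraph V) : ℕ :=
  sSup {d | ∃ (l : ℕ) (f g : Fin l → V),
    IsLazySweep G f ∧ IsLazySweep G g ∧ IsOpposite G f g ∧ mDist G f g = d}

/-- `L⊠_V(G)`: minimal length of lazy tracks realizing the strong vertex span. -/
noncomputable def strongVertexL {V : Type*} (G : SimpleGraph V) : ℕ :=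
  sInf {l | ∃ f g : Fin l → V,
    IsLazyTrack G f ∧ IsLazyTrack G g ∧ mDist G f g = strongVertexSpan G}

/-- `L×_V(G)`. -/
noncomputable def directVertexL {V : Type*} (G : SimpleGraph V) : ℕ :=
  sInf {l | ∃ f g : Fin l → V,
    IsTrack G f ∧ IsTrack G g ∧ mDist G f g = directVertexSpan G}

/-- `L□_V(G)`. -/
noncomputable def cartesianVertexL {V : Type*} (G : SimpleGraph V) : ℕ :=
  sInf {l | ∃ f g : Fin l → V,
    IsLazyTrack G f ∧ IsLazyTrack G g ∧ IsOpposite G f g ∧ mDist G f g = cartesianVertexSpan G}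

/-- `L⊠_E(G)`. -/
noncomputable def strongEdgeL {V : Type*} (G : SimpleGraph V) : ℕ :=
  sInf {l | ∃ f g : Fin l → V,
    IsLazySweep G f ∧ IsLazySweep G g ∧ mDist G f g = strongEdgeSpan G}

/-- `L×_E(G)`. -/
noncomputable def directEdgeL {V : Type*} (G : SimpleGraph V) : ℕ :=
  sInf {l | ∃ f g : Fin l → V,
    IsSweep G f ∧ IsSweep G g ∧ mDist G f g = directEdgeSpan G}

/-- `L□_E(G)`. -/
noncomputable def cartesianEdgeL {V : Type*} (G : SimpleGraph V) : ℕ :=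
  sInf {l | ∃ f g : Fin l → V,
    IsLazySweep G f ∧ IsLazySweep G g ∧ IsOpposite G f g ∧ mDist G f g = cartesianEdgeSpan G}

/-- `K_n^+`: the complete graph `K_n` (on `Fin n`, with `v_1 = 0` and `v_n = n-1`)
with the edge `v_1 v_n` subdivided through the new vertex `w = Sum.inr ()`. -/
def KnPlus (n : ℕ) : SimpleGraph (Fin n ⊕ Unit) :=
  SimpleGraph.fromRel (fun a b =>
    match a, b with
    | Sum.inl i, Sum.inl j =>
        ¬((i.val = 0 ∧ j.val = n - 1) ∨ (i.val = n - 1 ∧ j.val = 0))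
    | Sum.inl i, Sum.inr _ => i.val = 0 ∨ i.val = n - 1
    | Sum.inr _, _ => False)

/-!
A pair of tracks at distance at least `d` is a walk in the graph of pairs of vertices at distance at
least `d`, where both coordinates move along edges. So the vertex span is at least `d` iff some
component of this graph covers all vertices in both coordinates, and for the edge span it has to
cover all edges.

A connected graph on at most five vertices has a vertex within distance `2` of all others, so its
spans are at most `2`; the value `1` is always attained, by one player following the other. Suppose
then that a component for `d = 2` covers the vertices but that its first coordinate never traverses
the edge `uv`. When the players are at `(u, x)`, each neighbour `q ≠ v` of `x` must be adjacent
to `v`, for otherwise `(u, x)` could move to `(v, q)`. With only five vertices, this forces `G` to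
be `K₄⁺`, with `x` as the subdividing vertex. In `K₄⁺` itself the edge `uv` cannot be traversed: `x`
is the only vertex at distance `2` from `u`, and also from `v`, so the other player would have to
stay there.
-/

section PairGraph

variable {V : Type*} {G : SimpleGraph V} {d l : ℕ} {s t : V × V}

theorem mDist_le (f g : Fin l → V) (i : Fin l) : mDist G f g ≤ G.dist (f i) (g i) :=
  Nat.sInf_le ⟨i, rfl⟩

theorem le_mDist {f g : Fin (l + 1) → V} (h : ∀ i, d ≤ G.dist (f i) (g i)) : d ≤ mDist G f g :=
  le_csInf ⟨_, 0, rfl⟩ fun _ ⟨i, hi⟩ => hi ▸ h i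

theorem reachable_induction {W : Type*} {H : SimpleGraph W} {P : W → Prop} {a b : W}
    (h : H.Reachable a b) (ha : P a)
    (hP : ∀ x y, H.Reachable a x → H.Adj x y → P x → P y) : P b := by
  rw [reachable_iff_reflTransGen] at h
  induction h with
  | refl => exact ha
  | tail h hxy ih => exact hP _ _ ((reachable_iff_reflTransGen _ _).2 h) hxy ih

/-- The graph of simultaneous moves of two players on `G` who stay at distance at least `d`: pairs
of tracks `f`, `g` with `d ≤ mDist G f g` are walks in it. -/
def pairGraph (G : SimpleGraph V) (d : ℕ) : SimpleGraph (V × V) where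
  Adj s t := G.Adj s.1 t.1 ∧ G.Adj s.2 t.2 ∧ d ≤ G.dist s.1 s.2 ∧ d ≤ G.dist t.1 t.2
  symm := ⟨fun _ _ h => ⟨h.1.symm, h.2.1.symm, h.2.2.2, h.2.2.1⟩⟩
  loopless := ⟨fun _ h => h.1.ne rfl⟩

namespace pairGraph

theorem adj_swap (h : (pairGraph G d).Adj s t) : (pairGraph G d).Adj s.swap t.swap :=
  ⟨h.2.1, h.1, G.dist_comm ▸ h.2.2.1, G.dist_comm ▸ h.2.2.2⟩

theorem reachable_swap (h : (pairGraph G d).Reachable s t) :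
    (pairGraph G d).Reachable s.swap t.swap :=
  h.map ⟨Prod.swap, adj_swap⟩

theorem le_dist_of_reachable (h : (pairGraph G d).Reachable s t) (hs : d ≤ G.dist s.1 s.2) :
    d ≤ G.dist t.1 t.2 :=
  reachable_induction (P := fun t => d ≤ G.dist t.1 t.2) h hs fun _ _ _ h _ => h.2.2.2

theorem reachable_of_isTrack {f g : Fin (l + 1) → V} (hf : IsTrack G f) (hg : IsTrack G g)
    (hd : d ≤ mDist G f g) (i : Fin (l + 1)) :
    (pairGraph G d).Reachable (f 0, g 0) (f i, g i) := by
  obtain ⟨i, hi⟩ := i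
  induction i with
  | zero => exact .rfl
  | succ i ih =>
    refine (ih (by lia)).trans (Adj.reachable ?_)
    exact ⟨hf.2 i hi, hg.2 i hi, hd.trans (mDist_le ..), hd.trans (mDist_le ..)⟩

end pairGraph

/-- From the position `s` in `pairGraph G d`, each of the two players can visit every vertex
of `G`; this is what a pair of tracks with `d ≤ mDist G f g` amounts to. -/
structure Covers (G : SimpleGraph V) (d : ℕ) (s : V × V) : Prop where
  le_dist : d ≤ G.dist s.1 s.2
  exists_reachable_fst : ∀ v, ∃ x, (pairGraph G d).Reachable s (v, x)
  exists_reachable_snd : ∀ v, ∃ x, (pairGraph G d).Reachable s (x, v)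

theorem Covers.swap (hs : Covers G d s) : Covers G d s.swap where
  le_dist := G.dist_comm ▸ hs.le_dist
  exists_reachable_fst v := (hs.exists_reachable_snd v).imp fun _ => pairGraph.reachable_swap
  exists_reachable_snd v := (hs.exists_reachable_fst v).imp fun _ => pairGraph.reachable_swap

theorem covers_of_isTrack {f g : Fin (l + 1) → V} (hf : IsTrack G f) (hg : IsTrack G g) :
    Covers G (mDist G f g) (f 0, g 0) where
  le_dist := mDist_le ..
  exists_reachable_fst v := by
    obtain ⟨i, rfl⟩ := hf.1 v
    exact ⟨g i, pairGraph.reachable_of_isTrack hf hg le_rfl i⟩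
  exists_reachable_snd v := by
    obtain ⟨i, rfl⟩ := hg.1 v
    exact ⟨f i, pairGraph.reachable_of_isTrack hf hg le_rfl i⟩

/-- From the position `s` in `pairGraph G d`, the first player can move along the edge from `u`
to `v`. The second player is treated by passing to `s.swap`. -/
def Traverses (G : SimpleGraph V) (d : ℕ) (s : V × V) (u v : V) : Prop :=
  ∃ x y, (pairGraph G d).Reachable s (u, x) ∧ (pairGraph G d).Adj (u, x) (v, y)

theorem Traverses.symm {u v : V} (h : Traverses G d s u v) : Traverses G d s v u := by
  obtain ⟨x, y, hr, ha⟩ := h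
  exact ⟨y, x, hr.trans ha.reachable, ha.symm⟩

theorem exists_walk_mem_edges {W : Type*} [Finite W] (H : SimpleGraph W) (a : W) :
    ∃ (b : W) (p : H.Walk a b), ∀ x y, H.Reachable a x → H.Adj x y → s(x, y) ∈ p.edges := by
  suffices h : ∀ E : Set (W × W), E.Finite → ∃ (b : W) (p : H.Walk a b),
      ∀ e ∈ E, H.Reachable a e.1 → H.Adj e.1 e.2 → s(e.1, e.2) ∈ p.edges by
    obtain ⟨b, p, hp⟩ := h Set.univ Set.finite_univ
    exact ⟨b, p, fun x y => hp (x, y) trivial⟩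
  intro E hE
  induction E, hE using Set.Finite.induction_on with
  | empty => exact ⟨a, .nil, by simp⟩
  | @insert e E _ _ ih =>
    obtain ⟨b, p, hp⟩ := ih
    by_cases he : H.Reachable a e.1 ∧ H.Adj e.1 e.2
    · obtain ⟨q⟩ := p.reachable.symm.trans he.1
      refine ⟨e.2, (p.append q).concat he.2, fun e' he' hr ha => ?_⟩
      rcases he' with rfl | he'
      · simp
      · simp [hp e' he' hr ha]
    · refine ⟨b, p, fun e' he' hr ha => ?_⟩
      rcases he' with rfl | he'
      · exact absurd ⟨hr, ha⟩ he
      · exact hp e' he' hr ha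

theorem isSweep_getVert [Nontrivial V] (hG : G.Connected) {u v : V} {p : G.Walk u v}
    (hp : ∀ e ∈ G.edgeSet, e ∈ p.edges) (hl : l = p.length + 1) :
    IsSweep G fun i : Fin l => p.getVert i := by
  subst hl
  refine ⟨⟨fun x => ?_, fun i hi => p.adj_getVert_succ (by lia)⟩, fun e he => ?_⟩
  · obtain ⟨y, hxy⟩ := hG.preconnected.exists_adj_of_nontrivial x
    obtain ⟨i, hi, hil⟩ := p.mem_support_iff_exists_getVert.1
      (p.fst_mem_support_of_mem_edges (hp s(x, y) hxy))
    exact ⟨⟨i, by lia⟩, hi⟩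
  · induction e using Sym2.ind with
    | _ x y =>
      obtain ⟨i, hi, h⟩ := p.mk_mem_edges_iff_exists.1 (hp _ he)
      exact ⟨i, by lia, h.symm⟩

theorem bddAbove_mDist [Finite V] (P : ∀ l, (Fin l → V) → (Fin l → V) → Prop) :
    BddAbove {d | ∃ (l : ℕ) (f g : Fin l → V), P l f g ∧ mDist G f g = d} := by
  obtain ⟨B, hB⟩ := (Set.finite_range fun s : V × V => G.dist s.1 s.2).bddAbove
  refine ⟨B, ?_⟩
  rintro _ ⟨l, f, g, -, rfl⟩
  rcases l with _ | l
  · simp [mDist]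
  · exact (mDist_le f g 0).trans (hB ⟨(f 0, g 0), rfl⟩)

theorem mDist_le_directVertexSpan [Finite V] {f g : Fin l → V} (hf : IsTrack G f)
    (hg : IsTrack G g) : mDist G f g ≤ directVertexSpan G := by
  refine le_csSup ?_ ⟨l, f, g, hf, hg, rfl⟩
  simpa only [and_assoc] using bddAbove_mDist fun _ f g => IsTrack G f ∧ IsTrack G g

theorem mDist_le_directEdgeSpan [Finite V] {f g : Fin l → V} (hf : IsSweep G f)
    (hg : IsSweep G g) : mDist G f g ≤ directEdgeSpan G := by
  refine le_csSup ?_ ⟨l, f, g, hf, hg, rfl⟩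
  simpa only [and_assoc] using bddAbove_mDist fun _ f g => IsSweep G f ∧ IsSweep G g

theorem directEdgeSpan_le_directVertexSpan [Finite V] :
    directEdgeSpan G ≤ directVertexSpan G := by
  refine csSup_le' ?_
  rintro _ ⟨l, f, g, hf, hg, rfl⟩
  exact mDist_le_directVertexSpan hf.1 hg.1

theorem exists_covers_of_pos [Finite V] (h : 0 < directVertexSpan G) :
    ∃ s, Covers G (directVertexSpan G) s := by
  have hmem : directVertexSpan G ∈
      {d | ∃ (l : ℕ) (f g : Fin l → V), IsTrack G f ∧ IsTrack G g ∧ mDist G f g = d} := by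
    refine Nat.sSup_mem (Set.nonempty_iff_ne_empty.2 fun he => ?_) ?_
    · rw [directVertexSpan, he, csSup_empty] at h
      exact h.false
    · simpa only [and_assoc] using bddAbove_mDist fun _ f g => IsTrack G f ∧ IsTrack G g
  obtain ⟨l, f, g, hf, hg, hd⟩ := hmem
  rw [← hd] at h ⊢
  rcases l with _ | l
  · simp [mDist] at h
  · exact ⟨_, covers_of_isTrack hf hg⟩

theorem le_directEdgeSpan_of_traverses [Finite V] [Nontrivial V] (hG : G.Connected)
    (hs : d ≤ G.dist s.1 s.2) (h₁ : ∀ u v, G.Adj u v → Traverses G d s u v)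
    (h₂ : ∀ u v, G.Adj u v → Traverses G d s.swap u v) : d ≤ directEdgeSpan G := by
  obtain ⟨t, p, hp⟩ := exists_walk_mem_edges (pairGraph G d) s
  let fst : pairGraph G d →g G := ⟨Prod.fst, fun h => h.1⟩
  let snd : pairGraph G d →g G := ⟨Prod.snd, fun h => h.2.1⟩
  have hf : IsSweep G fun i : Fin (p.length + 1) => (p.map fst).getVert i := by
    refine isSweep_getVert hG (fun e he => ?_) (by simp)
    induction e using Sym2.ind with | _ u v
    obtain ⟨x, y, hr, ha⟩ := h₁ u v he
    rw [Walk.edges_map]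
    exact List.mem_map_of_mem (f := Sym2.map fst) (hp _ _ hr ha)
  have hg : IsSweep G fun i : Fin (p.length + 1) => (p.map snd).getVert i := by
    refine isSweep_getVert hG (fun e he => ?_) (by simp)
    induction e using Sym2.ind with | _ u v
    obtain ⟨x, y, hr, ha⟩ := h₂ u v he
    rw [Walk.edges_map]
    exact List.mem_map_of_mem (f := Sym2.map snd)
      (hp _ _ (pairGraph.reachable_swap hr) (pairGraph.adj_swap ha))
  refine (le_mDist fun i => ?_).trans (mDist_le_directEdgeSpan hf hg)
  simp only [Walk.getVert_map]
  exact pairGraph.le_dist_of_reachable (p.take i).reachable hs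

theorem directVertexSpan_le_of_forall_dist_le {r : ℕ} {u : V} (hu : ∀ v, G.dist u v ≤ r) :
    directVertexSpan G ≤ r := by
  refine csSup_le' ?_
  rintro _ ⟨l, f, g, hf, -, rfl⟩
  obtain ⟨i, rfl⟩ := hf.1 u
  exact (mDist_le f g i).trans (hu _)

theorem traverses_one_of_adj (hG : G.Connected) {a b u v : V} (hab : G.Adj a b)
    (huv : G.Adj u v) : Traverses G 1 (a, b) u v := by
  have step : ∀ {x y z}, G.Adj x y → G.Adj y z → (pairGraph G 1).Adj (x, y) (y, z) :=
    fun hxy hyz => ⟨hxy, hyz, (dist_eq_one_iff_adj.2 hxy).ge, (dist_eq_one_iff_adj.2 hyz).ge⟩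
  have reach : ∀ {b c} (_ : G.Walk b c) a, G.Adj a b →
      ∃ x, G.Adj x c ∧ (pairGraph G 1).Reachable (a, b) (x, c) := by
    intro b c p
    induction p with
    | nil => exact fun a hab => ⟨a, hab, .rfl⟩
    | cons h _ ih =>
      intro a hab
      obtain ⟨x, hx, hr⟩ := ih _ h
      exact ⟨x, hx, (step hab h).reachable.trans hr⟩
  obtain ⟨p⟩ := hG.preconnected b u
  obtain ⟨x, hx, hr⟩ := reach p a hab
  exact ⟨v, u, hr.trans (step hx huv).reachable, step huv huv.symm⟩

theorem one_le_directEdgeSpan [Finite V] [Nontrivial V] (hG : G.Connected) :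
    1 ≤ directEdgeSpan G := by
  obtain ⟨a⟩ := hG.nonempty
  obtain ⟨b, hab⟩ := hG.preconnected.exists_adj_of_nontrivial a
  exact le_directEdgeSpan_of_traverses (s := (a, b)) hG (dist_eq_one_iff_adj.2 hab).ge
    (fun _ _ => traverses_one_of_adj hG hab) fun _ _ => traverses_one_of_adj hG hab.symm

end PairGraph

section SmallOrder

variable {V : Type*} {G : SimpleGraph V}

theorem compl_adj_of_two_le_dist {u v : V} (h : 2 ≤ G.dist u v) : Gᶜ.Adj u v := by
  refine ⟨?_, fun ha => ?_⟩
  · rintro rfl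
    simp at h
  · simp [dist_eq_one_iff_adj.2 ha] at h

theorem mem_of_nodup_of_card_le [Fintype V] {L : List V} (hL : L.Nodup)
    (hc : Fintype.card V ≤ L.length) (w : V) : w ∈ L := by
  classical
  have huniv : L.toFinset = Finset.univ := Finset.eq_univ_of_card _
    (le_antisymm (Finset.card_le_univ _) (by rwa [List.toFinset_card_of_nodup hL]))
  exact List.mem_toFinset.1 (huniv ▸ Finset.mem_univ w)

theorem exists_adj_adj_adj_of_three_le_dist (hG : G.Connected) {a b : V} (h : 3 ≤ G.dist a b) :
    ∃ v c r, G.Adj a v ∧ G.Adj v c ∧ G.Adj c r ∧ G.dist a r = 3 := by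
  obtain ⟨p, hp⟩ := hG.exists_walk_length_eq_dist a b
  have h₀ := p.adj_getVert_succ (i := 0) (by lia)
  rw [p.getVert_zero] at h₀
  refine ⟨_, _, _, h₀, p.adj_getVert_succ (i := 1) (by lia), p.adj_getVert_succ (i := 2) (by lia),
    le_antisymm ?_ ?_⟩
  · exact (dist_le (p.take 3)).trans (by simp)
  · have h₁ := dist_le (p.drop 3)
    have h₂ := hG.dist_triangle (u := a) (v := p.getVert 3) (w := b)
    rw [p.drop_length] at h₁
    simp only [Nat.reduceAdd]
    lia

theorem exists_forall_dist_le_two [Fintype V] (hG : G.Connected) (hc : Fintype.card V ≤ 5) :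
    ∃ u, ∀ v, G.dist u v ≤ 2 := by
  by_contra! h
  have far : ∀ {x y z}, G.Adj x y → 3 ≤ G.dist x z → Gᶜ.Adj x z ∧ Gᶜ.Adj y z := by
    intro x y z hxy hxz
    have := hG.dist_triangle (u := x) (v := y) (w := z)
    rw [dist_eq_one_iff_adj.2 hxy] at this
    exact ⟨compl_adj_of_two_le_dist (by lia), compl_adj_of_two_le_dist (by lia)⟩
  obtain ⟨a⟩ := hG.nonempty
  obtain ⟨_, ha⟩ := h a
  obtain ⟨v, c, r, hav, hvc, hcr, har⟩ := exists_adj_adj_adj_of_three_le_dist hG ha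
  obtain ⟨b, hb⟩ := h v
  obtain ⟨b', hb'⟩ := h c
  have hva := far hav har.ge
  have hab := far hav.symm hb
  have hcb := far hvc hb
  have hvb' := far hvc.symm hb'
  have hrb' := far hcr hb'
  have hac : a ≠ c := by
    rintro rfl
    simp [dist_eq_one_iff_adj.2 hcr] at har
  have huniv := mem_of_nodup_of_card_le (L := [a, v, c, r, b])
    (by grind [SimpleGraph.compl_adj, SimpleGraph.Adj.symm, SimpleGraph.Adj.ne]) hc
  obtain rfl : b' = b := by
    have := huniv b'
    grind [SimpleGraph.compl_adj, SimpleGraph.Adj.symm]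
  have : Nontrivial V := ⟨a, v, hav.ne⟩
  obtain ⟨w, hw⟩ := hG.preconnected.exists_adj_of_nontrivial b'
  have := huniv w
  grind [SimpleGraph.compl_adj, SimpleGraph.Adj.symm, SimpleGraph.Adj.ne]

theorem two_le_dist_iff_compl_adj (hG : G.Connected) {u v : V} :
    2 ≤ G.dist u v ↔ Gᶜ.Adj u v :=
  ⟨compl_adj_of_two_le_dist, fun h => hG.one_lt_dist_of_ne_of_not_adj h.1 h.2⟩

theorem pairGraph.two_adj_iff (hG : G.Connected) {a b a' b' : V} :
    (pairGraph G 2).Adj (a, b) (a', b') ↔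
      G.Adj a a' ∧ G.Adj b b' ∧ Gᶜ.Adj a b ∧ Gᶜ.Adj a' b' := by
  simp only [pairGraph, two_le_dist_iff_compl_adj hG]

theorem not_reachable_of_not_adj (hG : G.Connected) {u v p x q : V}
    (huniv : ∀ w, w ∈ [p, u, v, q, x])
    (hup : G.Adj u p) (hxq : G.Adj x q) (huv : G.Adj u v) (hvq : G.Adj v q)
    (hux : Gᶜ.Adj u x) (hpq : Gᶜ.Adj p q) (hpx : ¬G.Adj p x) (t : V) :
    ¬(pairGraph G 2).Reachable (u, x) (t, u) := by
  intro h
  -- The first player is trapped in `{p, u, v}` and the second one in `{v, q, x}`.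
  refine absurd rfl (reachable_induction (P := fun a => a.1 ≠ x ∧ a.1 ≠ q ∧ a.2 ≠ u ∧ a.2 ≠ p) h
    ⟨hux.ne, ?_, hux.ne', ?_⟩ ?_).2.2.1
  · rintro rfl
    exact hux.2 hxq.symm
  · rintro rfl
    exact hux.2 hup
  · rintro ⟨a, b⟩ ⟨a', b'⟩ - hs
    obtain ⟨haa, hbb, hab, hab'⟩ := (pairGraph.two_adj_iff hG).1 hs
    have ha := huniv a
    have hb := huniv b
    have ha' := huniv a'
    have hb' := huniv b'
    grind [SimpleGraph.compl_adj, SimpleGraph.Adj.symm, SimpleGraph.Adj.ne]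

theorem nonempty_iso_knPlus_four {u v p x q : V} (hnd : [p, u, v, q, x].Nodup)
    (huniv : ∀ w, w ∈ [p, u, v, q, x]) (huv : G.Adj u v) (hup : G.Adj u p) (hpv : G.Adj p v)
    (hpx : G.Adj p x) (hxq : G.Adj x q) (hvq : G.Adj v q) (huq : G.Adj u q) (hux : ¬G.Adj u x)
    (hvx : ¬G.Adj v x) (hpq : ¬G.Adj p q) : Nonempty (G ≃g KnPlus 4) := by
  classical
  let e : Fin 4 ⊕ Unit ≃ V := ((Equiv.refl _).sumCongr finOneEquiv.symm).trans
    (finSumFinEquiv.trans (hnd.getEquivOfForallMemList _ huniv))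
  have he : ⇑e = Sum.elim ![p, u, v, q] fun _ => x := by
    ext (i | i)
    · fin_cases i <;> rfl
    · rfl
  refine ⟨Iso.symm ⟨e, fun {a b} => ?_⟩⟩
  rw [he]
  rcases a with a | a <;> fin_cases a <;> rcases b with b | b <;> fin_cases b <;>
    simp [KnPlus, *, huv.symm, hup.symm, hpv.symm, hpx.symm, hxq.symm, hvq.symm, huq.symm,
      mt Adj.symm hux, mt Adj.symm hvx, mt Adj.symm hpq]

variable {s : V × V} {u v x p q : V}

theorem Covers.compl_adj (hs : Covers G 2 s) (hr : (pairGraph G 2).Reachable s (u, x)) :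
    Gᶜ.Adj u x :=
  compl_adj_of_two_le_dist (pairGraph.le_dist_of_reachable hr hs.le_dist)

theorem Covers.adj_of_not_traverses (hs : Covers G 2 s) (hG : G.Connected) (huv : G.Adj u v)
    (h : ¬Traverses G 2 s u v) (hr : (pairGraph G 2).Reachable s (u, x)) (hxq : G.Adj x q)
    (hqv : q ≠ v) : G.Adj v q := by
  by_contra hvq
  exact h ⟨x, q, hr, (pairGraph.two_adj_iff hG).2 ⟨huv, hxq, hs.compl_adj hr, hqv.symm, hvq⟩⟩

variable [Fintype V]

theorem Covers.nonempty_iso_knPlus_four (hs : Covers G 2 s) (hG : G.Connected)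
    (hc : Fintype.card V ≤ 5) (huv : G.Adj u v) (h : ¬Traverses G 2 s u v)
    (hr : (pairGraph G 2).Reachable s (u, x)) (ha : (pairGraph G 2).Adj (u, x) (p, q))
    (hqv : q ≠ v) : Nonempty (G ≃g KnPlus 4) := by
  obtain ⟨hup, hxq, hux, hpq⟩ := (pairGraph.two_adj_iff hG).1 ha
  have hvq : G.Adj v q := hs.adj_of_not_traverses hG huv h hr hxq hqv
  have hnd : [p, u, v, q, x].Nodup := by
    grind [SimpleGraph.compl_adj, SimpleGraph.Adj.symm, SimpleGraph.Adj.ne]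
  have huniv := mem_of_nodup_of_card_le hnd hc
  have hpx : G.Adj p x := by
    by_contra hpx
    obtain ⟨t, ht⟩ := hs.exists_reachable_snd u
    exact not_reachable_of_not_adj hG huniv hup hxq huv hvq hux hpq hpx t (hr.symm.trans ht)
  have hvp : G.Adj v p := hs.adj_of_not_traverses hG huv h hr hpx.symm (by grind)
  obtain ⟨y, hry⟩ := hs.exists_reachable_fst v
  have hvy := hs.compl_adj hry
  obtain rfl : y = x := by
    have := huniv y
    grind [SimpleGraph.compl_adj, SimpleGraph.Adj.symm]
  have huq : G.Adj u q :=
    hs.adj_of_not_traverses hG huv.symm (mt Traverses.symm h) hry hxq (by grind)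
  exact nonempty_iso_knPlus_four hnd huniv huv hup hvp.symm hpx hxq hvq huq hux.2 hvy.2 hpq.2

theorem Covers.eq_of_adj (hs : Covers G 2 s) (hG : G.Connected) (hc : Fintype.card V ≤ 5)
    (huv : G.Adj u v) (h : ¬Traverses G 2 s u v)
    (hv : ∀ y p q, (pairGraph G 2).Reachable s (v, y) → (pairGraph G 2).Adj (v, y) (p, q) → q = u)
    (hr : (pairGraph G 2).Reachable s (u, x)) (ha : (pairGraph G 2).Adj (u, x) (p, v)) {z : V}
    (hpz : G.Adj p z) : z = u := by
  -- Otherwise `u, v, x, p, z` are all the vertices, and all but `z` are adjacent to `z`, so no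
  -- vertex is left for the second player while the first one visits `z`.
  by_contra hzu
  obtain ⟨hup, hxv, hux, hpv⟩ := (pairGraph.two_adj_iff hG).1 ha
  have hpx : ¬G.Adj p x := fun hpx =>
    hpv.2 (hs.adj_of_not_traverses hG huv h hr hpx.symm hpv.ne).symm
  have huniv := mem_of_nodup_of_card_le (L := [u, v, x, p, z])
    (by grind [SimpleGraph.compl_adj, SimpleGraph.Adj.symm, SimpleGraph.Adj.ne]) hc
  obtain ⟨y, hry⟩ := hs.exists_reachable_fst v
  have hvy := hs.compl_adj hry
  have hstep : ∀ q, G.Adj y q → Gᶜ.Adj x q → q = u := fun q hyq hq =>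
    hv y x q hry ((pairGraph.two_adj_iff hG).2 ⟨hxv.symm, hyq, hvy, hq⟩)
  have hxp : Gᶜ.Adj x p := by grind [SimpleGraph.compl_adj, SimpleGraph.Adj.symm]
  obtain rfl : y = p := by
    have := huniv y
    grind [SimpleGraph.compl_adj, SimpleGraph.Adj.symm]
  have hxz : G.Adj x z := by
    by_contra hxz
    exact hzu (hstep z hpz ⟨fun hxz => hpx (hxz ▸ hpz), hxz⟩)
  have hvz : G.Adj v z := hs.adj_of_not_traverses hG huv h hr hxz
    fun hzv => hvy.2 (hzv ▸ hpz.symm)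
  have huz : G.Adj u z :=
    hs.adj_of_not_traverses hG huv.symm (mt Traverses.symm h) hry hpz hzu
  obtain ⟨w, hrw⟩ := hs.exists_reachable_fst z
  have hzw := hs.compl_adj hrw
  have := huniv w
  grind [SimpleGraph.compl_adj, SimpleGraph.Adj.symm]

theorem Covers.exists_adj_ne (hs : Covers G 2 s) (hG : G.Connected) (hc : Fintype.card V ≤ 5)
    (huv : G.Adj u v) (h : ¬Traverses G 2 s u v)
    (hv : ∀ y p q, (pairGraph G 2).Reachable s (v, y) → (pairGraph G 2).Adj (v, y) (p, q) → q = u) :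
    ∃ x p q, (pairGraph G 2).Reachable s (u, x) ∧ (pairGraph G 2).Adj (u, x) (p, q) ∧ q ≠ v := by
  -- Otherwise the first player is at `u` on every other move, and whenever it is not, the second
  -- player is at `v`; so the second player never visits `u`.
  by_contra! hu
  obtain ⟨x, hx⟩ := hs.exists_reachable_fst u
  obtain ⟨t, ht⟩ := hs.exists_reachable_snd u
  have hP : t = u ∨
      ∃ y, (pairGraph G 2).Reachable s (u, y) ∧ (pairGraph G 2).Adj (u, y) (t, u) := by
    refine reachable_induction (hx.symm.trans ht) (P := fun a =>
      a.1 = u ∨ ∃ y, (pairGraph G 2).Reachable s (u, y) ∧ (pairGraph G 2).Adj (u, y) a)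
      (.inl rfl) ?_
    rintro ⟨a, b⟩ ⟨a', b'⟩ hra hab (rfl | ⟨y, hr, ha⟩)
    · exact .inr ⟨b, hx.trans hra, hab⟩
    · obtain rfl := hu _ _ _ hr ha
      exact .inl (hs.eq_of_adj hG hc huv h hv hr ha hab.1)
  rcases hP with rfl | ⟨y, hy, ha⟩
  · exact (hs.compl_adj ht).ne rfl
  · exact huv.ne (hu _ _ _ hy ha)

theorem Covers.traverses (hs : Covers G 2 s) (hG : G.Connected) (hc : Fintype.card V ≤ 5)
    (hK : IsEmpty (G ≃g KnPlus 4)) (huv : G.Adj u v) : Traverses G 2 s u v := by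
  by_contra h
  by_cases hv : ∀ y p q, (pairGraph G 2).Reachable s (v, y) →
      (pairGraph G 2).Adj (v, y) (p, q) → q = u
  · obtain ⟨x, p, q, hr, ha, hqv⟩ := hs.exists_adj_ne hG hc huv h hv
    exact not_isEmpty_iff.2 (hs.nonempty_iso_knPlus_four hG hc huv h hr ha hqv) hK
  · push Not at hv
    obtain ⟨y, p, q, hr, ha, hqu⟩ := hv
    exact not_isEmpty_iff.2
      (hs.nonempty_iso_knPlus_four hG hc huv.symm (mt Traverses.symm h) hr ha hqu) hK

theorem directVertexSpan_eq_directEdgeSpan (hG : G.Connected) (hc : Fintype.card V ≤ 5)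
    (hK : IsEmpty (G ≃g KnPlus 4)) : directVertexSpan G = directEdgeSpan G := by
  refine le_antisymm ?_ directEdgeSpan_le_directVertexSpan
  obtain h₀ | h₀ := Nat.eq_zero_or_pos (directVertexSpan G)
  · exact h₀ ▸ Nat.zero_le _
  obtain ⟨s, hs⟩ := exists_covers_of_pos h₀
  have : Nontrivial V := ⟨s.1, s.2, fun he => by simpa [he, h₀.ne'] using hs.le_dist⟩
  obtain ⟨u, hu⟩ := exists_forall_dist_le_two hG hc
  obtain h₁ | h₂ : directVertexSpan G = 1 ∨ directVertexSpan G = 2 := by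
    have := directVertexSpan_le_of_forall_dist_le hu
    lia
  · exact h₁ ▸ one_le_directEdgeSpan hG
  · rw [h₂] at hs ⊢
    exact le_directEdgeSpan_of_traverses hG hs.le_dist (fun _ _ => hs.traverses hG hc hK)
      fun _ _ => hs.swap.traverses hG hc hK

end SmallOrder

section Iso

variable {V V' : Type*} {G : SimpleGraph V} {G' : SimpleGraph V'} {l : ℕ}

theorem edist_map_le (f : G →g G') (u v : V) :
    G'.edist (f u) (f v) ≤ G.edist u v :=
  le_iInf fun p => (edist_le (p.map f)).trans_eq (by simp)

theorem dist_iso (e : G ≃g G') (u v : V) :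
    G'.dist (e u) (e v) = G.dist u v := by
  refine congrArg ENat.toNat (le_antisymm (edist_map_le e.toHom u v) ?_)
  simpa using edist_map_le e.symm.toHom (e u) (e v)

theorem mDist_iso (e : G ≃g G') (f g : Fin l → V) :
    mDist G' (e ∘ f) (e ∘ g) = mDist G f g := by
  simp only [mDist, Function.comp_apply, dist_iso]

theorem IsTrack.iso_comp (e : G ≃g G') {f : Fin l → V}
    (hf : IsTrack G f) : IsTrack G' (e ∘ f) :=
  ⟨e.surjective.comp hf.1, fun i hi => e.map_adj_iff.2 (hf.2 i hi)⟩

theorem IsSweep.iso_comp (e : G ≃g G') {f : Fin l → V}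
    (hf : IsSweep G f) : IsSweep G' (e ∘ f) := by
  refine ⟨hf.1.iso_comp e, fun x hx => ?_⟩
  induction x using Sym2.ind with | _ u v
  obtain ⟨i, hi, h⟩ := hf.2 s(e.symm u, e.symm v) (e.symm.map_adj_iff.2 hx)
  exact ⟨i, hi, by simpa using congrArg (Sym2.map e) h⟩

theorem directVertexSpan_iso (e : G ≃g G') :
    directVertexSpan G' = directVertexSpan G := by
  refine congrArg sSup (Set.ext fun d => ⟨?_, ?_⟩)
  · rintro ⟨l, f, g, hf, hg, rfl⟩
    exact ⟨l, _, _, hf.iso_comp e.symm, hg.iso_comp e.symm, mDist_iso e.symm f g⟩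
  · rintro ⟨l, f, g, hf, hg, rfl⟩
    exact ⟨l, _, _, hf.iso_comp e, hg.iso_comp e, mDist_iso e f g⟩

theorem directEdgeSpan_iso (e : G ≃g G') :
    directEdgeSpan G' = directEdgeSpan G := by
  refine congrArg sSup (Set.ext fun d => ⟨?_, ?_⟩)
  · rintro ⟨l, f, g, hf, hg, rfl⟩
    exact ⟨l, _, _, hf.iso_comp e.symm, hg.iso_comp e.symm, mDist_iso e.symm f g⟩
  · rintro ⟨l, f, g, hf, hg, rfl⟩
    exact ⟨l, _, _, hf.iso_comp e, hg.iso_comp e, mDist_iso e f g⟩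

end Iso

section KnPlusFour

variable {V : Type*} {G : SimpleGraph V}

theorem isTrack_iff {n : ℕ} {f : Fin (n + 1) → V} :
    IsTrack G f ↔ Function.Surjective f ∧ ∀ i : Fin n, G.Adj (f i.castSucc) (f i.succ) :=
  and_congr_right fun _ => ⟨fun h i => h i (by lia), fun h i hi => h ⟨i, by lia⟩⟩

theorem directEdgeSpan_le_one {u v w : V} (huv : G.Adj u v) (hu : ∀ x, Gᶜ.Adj u x → x = w)
    (hv : ∀ x, Gᶜ.Adj v x → x = w) : directEdgeSpan G ≤ 1 := by
  refine csSup_le' ?_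
  rintro _ ⟨l, f, g, hf, hg, rfl⟩
  by_contra! h
  have hfar : ∀ i, Gᶜ.Adj (f i) (g i) := fun i =>
    compl_adj_of_two_le_dist (h.trans_le (mDist_le f g i))
  obtain ⟨i, hi, he⟩ := hf.2 s(u, v) huv
  have hw : ∀ j, f j = u ∨ f j = v → g j = w := by
    rintro j (hj | hj)
    · exact hu _ (hj ▸ hfar j)
    · exact hv _ (hj ▸ hfar j)
  have hgi := hg.1.2 i hi
  rw [hw ⟨i, _⟩, hw ⟨i + 1, hi⟩] at hgi
  · exact hgi.ne rfl
  all_goals grind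

instance : DecidableRel (KnPlus 4).Adj := fun a b => by
  cases a <;> cases b <;> unfold KnPlus <;> simp only [fromRel_adj] <;> infer_instance

theorem ncard_edgeSet_knPlus_four : (KnPlus 4).edgeSet.ncard = 7 := by
  rw [← coe_edgeFinset, Set.ncard_coe_finset]
  decide

theorem connected_knPlus_four : (KnPlus 4).Connected := by
  have h : ∀ a, (KnPlus 4).Adj (.inl 0) a ∨
      ∃ c, (KnPlus 4).Adj (.inl 0) c ∧ (KnPlus 4).Adj c a := by decide
  refine (connected_iff_exists_forall_reachable _).2 ⟨.inl 0, fun a => ?_⟩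
  rcases h a with h | ⟨c, hc, hca⟩
  · exact h.reachable
  · exact hc.reachable.trans hca.reachable

theorem two_le_directVertexSpan_knPlus_four : 2 ≤ directVertexSpan (KnPlus 4) := by
  -- Both players go round the 4-cycles `0 w 3 1` and `0 w 3 2`, staying at opposite vertices.
  let f : Fin 8 → Fin 4 ⊕ Unit :=
    ![.inl 0, .inr (), .inl 3, .inl 1, .inl 0, .inr (), .inl 3, .inl 2]
  let g : Fin 8 → Fin 4 ⊕ Unit :=
    ![.inl 3, .inl 1, .inl 0, .inr (), .inl 3, .inl 2, .inl 0, .inr ()]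
  have hf : IsTrack (KnPlus 4) f := isTrack_iff.2 (by decide)
  have hg : IsTrack (KnPlus 4) g := isTrack_iff.2 (by decide)
  have hfg : ∀ i, f i ≠ g i ∧ ¬(KnPlus 4).Adj (f i) (g i) := by decide
  refine le_trans (le_mDist fun i => ?_) (mDist_le_directVertexSpan hf hg)
  exact connected_knPlus_four.one_lt_dist_of_ne_of_not_adj (hfg i).1 (hfg i).2

theorem directEdgeSpan_knPlus_four_le : directEdgeSpan (KnPlus 4) ≤ 1 :=
  directEdgeSpan_le_one (u := .inl 1) (v := .inl 2) (w := .inr ()) (by decide) (by decide)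
    (by decide)

end KnPlusFour

theorem stmt10_general {V : Type*} [Fintype V] {G : SimpleGraph V} (hG : G.Connected)
    (hc : Fintype.card V ≤ 5) :
    directVertexSpan G ≠ directEdgeSpan G ↔ Nonempty (G ≃g KnPlus 4) := by
  refine ⟨fun h => ?_, fun ⟨e⟩ => ?_⟩
  · contrapose! h
    exact directVertexSpan_eq_directEdgeSpan hG hc h
  · rw [← directVertexSpan_iso e, ← directEdgeSpan_iso e]
    exact (directEdgeSpan_knPlus_four_le.trans_lt two_le_directVertexSpan_knPlus_four).ne'

theorem stmt10 :
    (∀ (V : Type) [Fintype V] (G : SimpleGraph V), G.Connected → Fintype.card V ≤ 4 →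
      directVertexSpan G = directEdgeSpan G) ∧
    (∀ (V : Type) [Fintype V] (G : SimpleGraph V), G.Connected → Fintype.card V = 5 →
      G.edgeSet.ncard ≤ 6 → directVertexSpan G = directEdgeSpan G) ∧
    (Fintype.card (Fin 4 ⊕ Unit) = 5 ∧ (KnPlus 4).edgeSet.ncard = 7 ∧
      directVertexSpan (KnPlus 4) ≠ directEdgeSpan (KnPlus 4)) := by
  refine ⟨fun V _ G hG hc => ?_, fun V _ G hG hc hE => ?_, rfl, ncard_edgeSet_knPlus_four,
    (stmt10_general connected_knPlus_four le_rfl).2 ⟨.refl⟩⟩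
  · by_contra h
    obtain ⟨e⟩ := (stmt10_general hG (by lia)).1 h
    have : Fintype.card V = 5 := Fintype.card_congr e.toEquiv
    lia
  · by_contra h
    obtain ⟨e⟩ := (stmt10_general hG hc.le).1 h
    have : G.edgeSet.ncard = 7 :=
      (Nat.card_congr e.mapEdgeSet).trans ncard_edgeSet_knPlus_four
    lia
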